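/- arXiv:2604.12302 — 6 statements merged into one kernel-verified Lean document; each statement's English description precedes it below -/
import Mathlib

section
/- Let X be a metric space, let μ_1, μ_2, ν_1, ν_2 be Borel probability measures on X, and let 0 < a < 1. Then the Prokhorov distance satisfies d_P(a μ_1 + (1−a) μ_2, a ν_1 + (1−a) ν_2) ≤ d_P(μ_1, ν_1) + 1 − a. -/
open MeasureTheory

/-- The Prokhorov distance between two Borel probability measures `μ`, `ν` on a metric
space `X`: `d_P(μ, ν) := inf {ε > 0 | μ(U_ε(A)) ≥ ν(A) − ε for every Borel set A}`,
where `U_ε(A)` is the open `ε`-neighborhood (thickening) of `A`. -/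
noncomputable def prokhorovDist {X : Type*} [MetricSpace X] [MeasurableSpace X]
    (μ ν : Measure X) : ℝ :=
  sInf {ε : ℝ | 0 < ε ∧ ∀ A : Set X, MeasurableSet A →
    ν A ≤ μ (Metric.thickening ε A) + ENNReal.ofReal ε}

/-- `d_P(a μ₁ + (1−a) μ₂, a ν₁ + (1−a) ν₂) ≤ d_P(μ₁, ν₁) + 1 − a` for `0 < a < 1`. -/
theorem prokhorovDist_convexCombo_two_le {X : Type*} [MetricSpace X] [MeasurableSpace X]
    [BorelSpace X]
    (μ₁ μ₂ ν₁ ν₂ : Measure X)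
    (hμ₁ : IsProbabilityMeasure μ₁) (hμ₂ : IsProbabilityMeasure μ₂)
    (hν₁ : IsProbabilityMeasure ν₁) (hν₂ : IsProbabilityMeasure ν₂)
    (a : ℝ) (ha0 : 0 < a) (ha1 : a < 1) :
    prokhorovDist (ENNReal.ofReal a • μ₁ + ENNReal.ofReal (1 - a) • μ₂)
        (ENNReal.ofReal a • ν₁ + ENNReal.ofReal (1 - a) • ν₂) ≤
      prokhorovDist μ₁ ν₁ + 1 - a := by
  suffices h : prokhorovDist (ENNReal.ofReal a • μ₁ + ENNReal.ofReal (1 - a) • μ₂)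
      (ENNReal.ofReal a • ν₁ + ENNReal.ofReal (1 - a) • ν₂) - (1 - a) ≤
        prokhorovDist μ₁ ν₁ by linarith
  refine le_csInf ⟨1, one_pos, fun A _ ↦ ?_⟩ ?_
  · rw [ENNReal.ofReal_one]
    exact prob_le_one.trans le_add_self
  rintro ε ⟨hε, h⟩
  rw [sub_le_iff_le_add]
  refine csInf_le ⟨0, fun δ hδ ↦ hδ.1.le⟩ ⟨by linarith, fun A hA ↦ ?_⟩
  have ha : ENNReal.ofReal a ≤ 1 := ENNReal.ofReal_le_one.2 ha1.le
  have hthick : μ₁ (Metric.thickening ε A) ≤ μ₁ (Metric.thickening (ε + (1 - a)) A) :=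
    measure_mono (Metric.thickening_mono (by linarith) A)
  simp only [Measure.add_apply, Measure.smul_apply, smul_eq_mul]
  rw [ENNReal.ofReal_add hε.le (by linarith)]
  calc ENNReal.ofReal a * ν₁ A + ENNReal.ofReal (1 - a) * ν₂ A
      ≤ ENNReal.ofReal a * (μ₁ (Metric.thickening (ε + (1 - a)) A) + ENNReal.ofReal ε)
          + ENNReal.ofReal (1 - a) * 1 := by
        gcongr
        · exact (h A hA).trans (by gcongr)
        · exact prob_le_one
    _ ≤ ENNReal.ofReal a * μ₁ (Metric.thickening (ε + (1 - a)) A)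
          + (ENNReal.ofReal ε + ENNReal.ofReal (1 - a)) := by
        rw [mul_add, mul_one, add_assoc]
        gcongr
        exact mul_le_of_le_one_left zero_le ha
    _ ≤ _ := by
        gcongr
        exact le_self_add
end

section
/- Let X be a metric space. Let (a_n)_{n∈ℕ} and (b_n)_{n∈ℕ} be sequences of nonnegative real numbers with ∑_{n} a_n = ∑_{n} b_n = 1, and let (μ_n)_{n∈ℕ} and (ν_n)_{n∈ℕ} be Borel probability measures on X. Then for every M ∈ ℕ, the Prokhorov distance satisfies d_P(∑_{n} a_n μ_n, ∑_{n} b_n ν_n) ≤ max_{n < M} d_P(μ_n, ν_n) + ∑_{n} |a_n − b_n| + ∑_{n ≥ M} a_n + ∑_{n ≥ M} b_n. -/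
open MeasureTheory

/-- The Prokhorov distance is nonnegative. -/
theorem prokhorovDist_nonneg {X : Type*} [MetricSpace X] [MeasurableSpace X]
    (μ ν : Measure X) : 0 ≤ prokhorovDist μ ν :=
  Real.sInf_nonneg fun _ h => h.1.le

/-- Every `ε` satisfying the Prokhorov inequality bounds the Prokhorov distance. -/
theorem prokhorovDist_le_of_forall_le {X : Type*} [MetricSpace X] [MeasurableSpace X]
    {μ ν : Measure X} {ε : ℝ} (hε : 0 < ε)
    (h : ∀ A : Set X, MeasurableSet A →
      ν A ≤ μ (Metric.thickening ε A) + ENNReal.ofReal ε) :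
    prokhorovDist μ ν ≤ ε :=
  csInf_le ⟨0, fun _ h => h.1.le⟩ ⟨hε, h⟩

/-- The Prokhorov inequality holds for every `ε` above the Prokhorov distance. -/
theorem measure_le_of_prokhorovDist_lt {X : Type*} [MetricSpace X] [MeasurableSpace X]
    {μ ν : Measure X} [IsProbabilityMeasure ν] {ε : ℝ} (h : prokhorovDist μ ν < ε)
    {A : Set X} (hA : MeasurableSet A) :
    ν A ≤ μ (Metric.thickening ε A) + ENNReal.ofReal ε := by
  have hne : {ε : ℝ | 0 < ε ∧ ∀ A : Set X, MeasurableSet A →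
      ν A ≤ μ (Metric.thickening ε A) + ENNReal.ofReal ε}.Nonempty :=
    ⟨1, one_pos, fun A _ => le_add_left (by simpa using prob_le_one)⟩
  obtain ⟨r, ⟨-, hr⟩, hrε⟩ := exists_lt_of_csInf_lt hne h
  exact (hr A hA).trans <| add_le_add
    (measure_mono (Metric.thickening_mono hrε.le A)) (ENNReal.ofReal_le_ofReal hrε.le)

/-- Replacing the weight of a probability measure costs at most the change of weight. -/
theorem ofReal_mul_measure_le {X : Type*} [MeasurableSpace X] (ν : Measure X)
    [IsProbabilityMeasure ν] {a b : ℝ} (ha : 0 ≤ a) (A : Set X) :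
    ENNReal.ofReal b * ν A ≤ ENNReal.ofReal a * ν A + ENNReal.ofReal |a - b| := by
  have hab : ENNReal.ofReal b ≤ ENNReal.ofReal a + ENNReal.ofReal |a - b| := by
    rw [← ENNReal.ofReal_add ha (abs_nonneg _)]
    exact ENNReal.ofReal_le_ofReal (by linarith [neg_abs_le (a - b)])
  calc ENNReal.ofReal b * ν A
      ≤ (ENNReal.ofReal a + ENNReal.ofReal |a - b|) * ν A := by gcongr
    _ = ENNReal.ofReal a * ν A + ENNReal.ofReal |a - b| * ν A := add_mul _ _ _
    _ ≤ ENNReal.ofReal a * ν A + ENNReal.ofReal |a - b| := by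
        gcongr
        exact mul_le_of_le_one_right' prob_le_one

/-- For countable convex combinations `∑ aₙ μₙ` and `∑ bₙ νₙ` (nonnegative weights summing
to 1), and any `M ∈ ℕ` (here positive, since the paper's `ℕ` starts at `1`):
`d_P(∑ aₙ μₙ, ∑ bₙ νₙ) ≤ max_{n<M} d_P(μₙ, νₙ) + ∑ |aₙ − bₙ| + ∑_{n≥M} aₙ + ∑_{n≥M} bₙ`. -/
theorem prokhorovDist_countable_convexCombo_le {X : Type*} [MetricSpace X]
    [MeasurableSpace X] [BorelSpace X]
    (a b : ℕ → ℝ) (ha0 : ∀ n, 0 ≤ a n) (hb0 : ∀ n, 0 ≤ b n)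
    (hasum : ∑' n, a n = 1) (hbsum : ∑' n, b n = 1)
    (μ ν : ℕ → Measure X)
    (hμ : ∀ n, IsProbabilityMeasure (μ n)) (hν : ∀ n, IsProbabilityMeasure (ν n))
    (M : ℕ) (hM : 0 < M) :
    prokhorovDist (Measure.sum fun n => ENNReal.ofReal (a n) • μ n)
        (Measure.sum fun n => ENNReal.ofReal (b n) • ν n) ≤
      (Finset.range M).sup' (Finset.nonempty_range_iff.mpr hM.ne')
          (fun n => prokhorovDist (μ n) (ν n))
        + (∑' n, |a n - b n|) + (∑' n, a (M + n)) + (∑' n, b (M + n)) := by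
  have ha : Summable a := by
    by_contra h
    simp [tsum_eq_zero_of_not_summable h] at hasum
  have hb : Summable b := by
    by_contra h
    simp [tsum_eq_zero_of_not_summable h] at hbsum
  set S := (Finset.range M).sup' (Finset.nonempty_range_iff.mpr hM.ne')
    (fun n => prokhorovDist (μ n) (ν n))
  have hle : ∀ n < M, prokhorovDist (μ n) (ν n) ≤ S := fun n hn =>
    Finset.le_sup' (fun n => prokhorovDist (μ n) (ν n)) (Finset.mem_range.mpr hn)
  have hS0 : 0 ≤ S := (prokhorovDist_nonneg _ _).trans (hle 0 hM)
  have hD0 : 0 ≤ ∑' n, |a n - b n| := tsum_nonneg fun _ => abs_nonneg _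
  have hTa0 : 0 ≤ ∑' n, a (M + n) := tsum_nonneg fun _ => ha0 _
  have hTb0 : 0 ≤ ∑' n, b (M + n) := tsum_nonneg fun _ => hb0 _
  refine le_of_forall_pos_le_add fun δ hδ => ?_
  refine prokhorovDist_le_of_forall_le (by positivity) fun A hA => ?_
  set ε := S + ∑' n, |a n - b n| + ∑' n, a (M + n) + ∑' n, b (M + n) + δ
  set U := Metric.thickening ε A
  have hU : MeasurableSet U := Metric.isOpen_thickening.measurableSet
  have hterm : ∀ n < M, ENNReal.ofReal (b n) * ν n A ≤
      ENNReal.ofReal (a n) * μ n U + ENNReal.ofReal (a n) * ENNReal.ofReal (S + δ)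
        + ENNReal.ofReal |a n - b n| := by
    intro n hn
    refine (ofReal_mul_measure_le (ν n) (ha0 n) A).trans ?_
    rw [← mul_add]
    gcongr
    refine (measure_le_of_prokhorovDist_lt ((hle n hn).trans_lt (lt_add_of_pos_right S hδ))
      hA).trans ?_
    gcongr
    exact Metric.thickening_mono (by linarith) A
  have htail : ∑' n, ENNReal.ofReal (b (n + M)) * ν (n + M) A ≤
      ENNReal.ofReal (∑' n, b (M + n)) := by
    simp_rw [add_comm M]
    rw [ENNReal.ofReal_tsum_of_nonneg (fun n => hb0 _) ((summable_nat_add_iff M).mpr hb)]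
    exact ENNReal.tsum_le_tsum fun n => mul_le_of_le_one_right' prob_le_one
  have hhead : ∑ n ∈ Finset.range M, ENNReal.ofReal (b n) * ν n A ≤
      ∑' n, ENNReal.ofReal (a n) * μ n U + ENNReal.ofReal (S + δ)
        + ENNReal.ofReal (∑' n, |a n - b n|) := by
    calc ∑ n ∈ Finset.range M, ENNReal.ofReal (b n) * ν n A
        ≤ ∑ n ∈ Finset.range M, (ENNReal.ofReal (a n) * μ n U
            + ENNReal.ofReal (a n) * ENNReal.ofReal (S + δ) + ENNReal.ofReal |a n - b n|) :=
          Finset.sum_le_sum fun n hn => hterm n (Finset.mem_range.mp hn)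
      _ ≤ ∑' n, (ENNReal.ofReal (a n) * μ n U
            + ENNReal.ofReal (a n) * ENNReal.ofReal (S + δ) + ENNReal.ofReal |a n - b n|) :=
          ENNReal.sum_le_tsum _
      _ = _ := by
          rw [ENNReal.tsum_add, ENNReal.tsum_add, ENNReal.tsum_mul_right,
            ← ENNReal.ofReal_tsum_of_nonneg ha0 ha, hasum, ENNReal.ofReal_one, one_mul,
            ← ENNReal.ofReal_tsum_of_nonneg (fun _ => abs_nonneg _) (ha.sub hb).abs]
  rw [Measure.sum_apply _ hA, Measure.sum_apply _ hU]
  simp only [Measure.smul_apply, smul_eq_mul]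
  rw [← ENNReal.summable.sum_add_tsum_nat_add' (k := M)]
  refine (add_le_add hhead htail).trans ?_
  rw [add_assoc, add_assoc, ← ENNReal.ofReal_add hD0 hTb0,
    ← ENNReal.ofReal_add (by positivity) (by positivity)]
  gcongr
  linarith
end

section
/- Let X be a separable metric space. Let a = (a_n)_{n∈ℕ} and, for each k ∈ ℕ, a_k = (a_{n,k})_{n∈ℕ} be sequences of nonnegative real numbers with ∑_n a_n = 1 and ∑_n a_{n,k} = 1 for every k. Let (μ_n)_{n∈ℕ} and, for each k, (μ_{n,k})_{n∈ℕ} be Borel probability measures on X. If ∑_n |a_{n,k} − a_n| → 0 as k → ∞ and, for each n, μ_{n,k} converges weakly to μ_n as k → ∞, then ∑_n a_{n,k} μ_{n,k} converges weakly to ∑_n a_n μ_n as k → ∞. -/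
open MeasureTheory

section CountableConvexCombination

variable {X : Type*} [MeasurableSpace X] {a : ℕ → ℝ} {μ : ℕ → Measure X}

theorem isFiniteMeasure_sum_ofReal_smul (ha0 : ∀ n, 0 ≤ a n) (ha : Summable a)
    (hμ : ∀ n, IsProbabilityMeasure (μ n)) :
    IsFiniteMeasure (Measure.sum fun n => ENNReal.ofReal (a n) • μ n) := by
  refine ⟨?_⟩
  simp [Measure.sum_apply, ← ENNReal.ofReal_tsum_of_nonneg ha0 ha]

theorem integral_sum_ofReal_smul [TopologicalSpace X] [OpensMeasurableSpace X]
    (ha0 : ∀ n, 0 ≤ a n) (ha : Summable a) (hμ : ∀ n, IsProbabilityMeasure (μ n))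
    (f : BoundedContinuousFunction X ℝ) :
    ∫ x, f x ∂(Measure.sum fun n => ENNReal.ofReal (a n) • μ n) = ∑' n, a n * ∫ x, f x ∂(μ n) := by
  have := isFiniteMeasure_sum_ofReal_smul ha0 ha hμ
  rw [integral_sum_measure (f.integrable _)]
  simp [integral_smul_measure, ha0]

end CountableConvexCombination

/-- If the weights converge in `ℓ¹` and the uniformly bounded terms converge pointwise, then
the weighted sums converge. -/
theorem tendsto_tsum_mul_of_tendsto_tsum_abs_sub {a : ℕ → ℝ} {a' b' : ℕ → ℕ → ℝ} {b : ℕ → ℝ}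
    {C : ℝ} (ha : Summable a) (ha' : ∀ k, Summable (a' k)) (hb' : ∀ k n, |b' k n| ≤ C)
    (haconv : Filter.Tendsto (fun k => ∑' n, |a' k n - a n|) Filter.atTop (nhds 0))
    (hbconv : ∀ n, Filter.Tendsto (fun k => b' k n) Filter.atTop (nhds (b n))) :
    Filter.Tendsto (fun k => ∑' n, a' k n * b' k n) Filter.atTop (nhds (∑' n, a n * b n)) := by
  have bound (c : ℕ → ℝ) (k n : ℕ) : ‖c n * b' k n‖ ≤ |c n| * C := by
    rw [Real.norm_eq_abs, abs_mul]
    exact mul_le_mul_of_nonneg_left (hb' k n) (abs_nonneg _)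
  have hdiff (k : ℕ) : Summable fun n => |a' k n - a n| := ((ha' k).sub ha).abs
  have hfixed : Filter.Tendsto (fun k => ∑' n, a n * b' k n) Filter.atTop
      (nhds (∑' n, a n * b n)) :=
    tendsto_tsum_of_dominated_convergence (ha.abs.mul_right C)
      (fun n => (hbconv n).const_mul (a n)) (.of_forall fun k n => bound a k n)
  have herror : Filter.Tendsto (fun k => ∑' n, (a' k n - a n) * b' k n) Filter.atTop
      (nhds 0) := by
    refine squeeze_zero_norm (fun k => ?_) (by simpa using haconv.mul_const C)
    rw [← tsum_mul_right]
    exact tsum_of_norm_bounded ((hdiff k).mul_right C).hasSum (bound (fun n => a' k n - a n) k)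
  convert herror.add hfixed using 2 with k
  · rw [← Summable.tsum_add
      (.of_norm_bounded ((hdiff k).mul_right C) (bound (fun n => a' k n - a n) k))
      (.of_norm_bounded (ha.abs.mul_right C) (bound a k))]
    exact tsum_congr fun n => by ring
  · rw [zero_add]

/-- Continuity of countable convex combinations of probability measures: if the weight
sequences converge in `ℓ¹` and each `μₙₖ → μₙ` weakly (i.e. integrals of all bounded
continuous functions converge), then `∑ₙ aₙₖ μₙₖ → ∑ₙ aₙ μₙ` weakly as `k → ∞`. -/
theorem convexCombo_tendsto_weakly {X : Type*} [MetricSpace X]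
    [TopologicalSpace.SeparableSpace X] [MeasurableSpace X] [BorelSpace X]
    (a : ℕ → ℝ) (a' : ℕ → ℕ → ℝ)
    (ha0 : ∀ n, 0 ≤ a n) (ha'0 : ∀ k n, 0 ≤ a' k n)
    (hasum : ∑' n, a n = 1) (ha'sum : ∀ k, ∑' n, a' k n = 1)
    (μ : ℕ → Measure X) (μ' : ℕ → ℕ → Measure X)
    (hμ : ∀ n, IsProbabilityMeasure (μ n)) (hμ' : ∀ k n, IsProbabilityMeasure (μ' k n))
    (haconv : Filter.Tendsto (fun k => ∑' n, |a' k n - a n|) Filter.atTop (nhds 0))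
    (hμconv : ∀ n, ∀ f : BoundedContinuousFunction X ℝ,
      Filter.Tendsto (fun k => ∫ x, f x ∂(μ' k n)) Filter.atTop (nhds (∫ x, f x ∂(μ n)))) :
    ∀ f : BoundedContinuousFunction X ℝ,
      Filter.Tendsto
        (fun k => ∫ x, f x ∂(Measure.sum fun n => ENNReal.ofReal (a' k n) • μ' k n))
        Filter.atTop
        (nhds (∫ x, f x ∂(Measure.sum fun n => ENNReal.ofReal (a n) • μ n))) := by
  intro f
  have summable_of_tsum_eq_one {c : ℕ → ℝ} (hc : ∑' n, c n = 1) : Summable c := by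
    by_contra h
    simp [tsum_eq_zero_of_not_summable h] at hc
  have ha := summable_of_tsum_eq_one hasum
  have ha' (k : ℕ) := summable_of_tsum_eq_one (ha'sum k)
  simp only [integral_sum_ofReal_smul ha0 ha hμ, fun k =>
    integral_sum_ofReal_smul (ha'0 k) (ha' k) (hμ' k)]
  exact tendsto_tsum_mul_of_tendsto_tsum_abs_sub ha ha'
    (fun k n => f.norm_integral_le_norm (μ' k n)) haconv (fun n => hμconv n f)
end

section
/- Let X be a complete separable metric space and μ a Borel probability measure on X whose support is all of X and which contains at least two points. Fix a real number p with 1 ≤ p < ∞. For each n ∈ ℕ, equip X^n with the ℓ^p product metric d_p((x_i), (y_i)) := (∑_{i=1}^n dist(x_i, y_i)^p)^{1/p} and with the n-fold product measure μ^{⊗n}. Then for every r > 0, lim_{n→∞} sup_{x ∈ X^n} μ^{⊗n}(U_r(x)) = 0, where U_r(x) is the open ball of radius r about x in the ℓ^p product metric. -/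
open MeasureTheory

/-- A function bounded by `1`, and by `q ≤ 1` on a measurable set of measure at least `m`, has
integral at most `1 - m * (1 - q)`. -/
lemma integral_le_one_sub_mul_of_le_on {X : Type*} [MeasurableSpace X] (μ : Measure X)
    [IsProbabilityMeasure μ] {f : X → ℝ} (hf : Integrable f μ) {B : Set X} (hB : MeasurableSet B)
    {q m : ℝ} (hq : q ≤ 1) (hm : m ≤ μ.real B) (h1 : ∀ y, f y ≤ 1) (h2 : ∀ y ∈ B, f y ≤ q) :
    ∫ y, f y ∂μ ≤ 1 - m * (1 - q) := by
  have hint : Integrable (B.indicator fun _ => 1 - q) μ := (integrable_const _).indicator hB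
  calc ∫ y, f y ∂μ ≤ ∫ y, (1 - B.indicator (fun _ => 1 - q) y) ∂μ := by
        refine integral_mono hf ((integrable_const _).sub hint) fun y => ?_
        by_cases hy : y ∈ B
        · simpa [hy] using h2 y hy
        · simpa [hy] using h1 y
    _ = 1 - μ.real B * (1 - q) := by
        rw [integral_sub (integrable_const _) hint, integral_indicator_const _ hB]
        simp
    _ ≤ 1 - m * (1 - q) := by
        have := mul_le_mul_of_nonneg_right hm (sub_nonneg.2 hq)
        linarith

/-- The Laplace transforms `∫ exp (-dist x y ^ p) dμ(y)` are bounded away from `1`, uniformly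
in the center `x`. -/
lemma exists_integral_exp_neg_dist_rpow_le {X : Type*} [MetricSpace X] [MeasurableSpace X]
    [BorelSpace X] [Nontrivial X] (μ : Measure X) [IsProbabilityMeasure μ]
    (hsupp : ∀ x : X, ∀ ε > 0, 0 < μ (Metric.ball x ε)) {p : ℝ} (hp : 0 < p) :
    ∃ c < 1, ∀ x : X, ∫ y, Real.exp (-dist x y ^ p) ∂μ ≤ c := by
  obtain ⟨a, b, hab⟩ := exists_pair_ne X
  set D := dist a b
  have hD : 0 < D := dist_pos.2 hab
  have hpos : ∀ z, 0 < μ.real (Metric.ball z (D / 4)) := fun z =>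
    ENNReal.toReal_pos (hsupp z _ (by positivity)).ne' (measure_ne_top _ _)
  set m := min (μ.real (Metric.ball a (D / 4))) (μ.real (Metric.ball b (D / 4)))
  have hm : 0 < m := lt_min (hpos a) (hpos b)
  set q := Real.exp (-(D / 4) ^ p)
  have hq : q < 1 := Real.exp_lt_one_iff.2 (neg_neg_of_pos (by positivity))
  refine ⟨1 - m * (1 - q), by nlinarith [mul_pos hm (sub_pos.2 hq)], fun x => ?_⟩
  have hf1 : ∀ y, Real.exp (-dist x y ^ p) ≤ 1 := fun y =>
    Real.exp_le_one_iff.2 (neg_nonpos.2 (by positivity))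
  have hf : Integrable (fun y => Real.exp (-dist x y ^ p)) μ := by
    refine Integrable.of_bound (C := 1) ?_ (ae_of_all _ fun y => ?_)
    · have : Measurable fun y => dist x y := (continuous_const.dist continuous_id).measurable
      exact (Real.measurable_exp.comp (this.pow_const p).neg).aestronglyMeasurable
    · simpa using hf1 y
  have key : ∀ z, D / 2 ≤ dist x z → m ≤ μ.real (Metric.ball z (D / 4)) →
      ∫ y, Real.exp (-dist x y ^ p) ∂μ ≤ 1 - m * (1 - q) := by
    intro z hz hmz
    refine integral_le_one_sub_mul_of_le_on μ hf Metric.isOpen_ball.measurableSet hq.le hmz hf1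
      fun y hy => Real.exp_le_exp.2 (neg_le_neg ?_)
    have hyz : dist y z < D / 4 := hy
    exact Real.rpow_le_rpow (by positivity) (by linarith [dist_triangle x y z]) hp.le
  rcases le_total (D / 2) (dist x a) with h | h
  · exact key a h (min_le_left _ _)
  · refine key b ?_ (min_le_right _ _)
    have : D ≤ dist x a + dist x b := dist_triangle_left a b x
    linarith

/-- Chernoff bound for the measure of a ball in an `ℓᵖ`-product. -/
lemma measureReal_pi_lp_ball_le {X : Type*} [MetricSpace X] [MeasurableSpace X]
    [BorelSpace X] (μ : Measure X) [IsProbabilityMeasure μ] {p r c : ℝ} (hp : 0 < p) (hr : 0 ≤ r)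
    (hc : ∀ x : X, ∫ y, Real.exp (-dist x y ^ p) ∂μ ≤ c) {n : ℕ} (x : Fin n → X) :
    (Measure.pi fun _ : Fin n => μ).real
      {y : Fin n → X | (∑ i, dist (x i) (y i) ^ p) ^ (1 / p) < r} ≤ Real.exp (r ^ p) * c ^ n := by
  set P := Measure.pi fun _ : Fin n => μ
  let F : (Fin n → X) → ℝ := fun y => ∏ i, Real.exp (-dist (x i) (y i) ^ p)
  have hF0 : ∀ y, 0 ≤ F y := fun y => Finset.prod_nonneg fun i _ => (Real.exp_pos _).le
  have hFm : Measurable F := by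
    refine Finset.measurable_fun_prod _ fun i _ => ?_
    have h : Measurable fun z => dist (x i) z := (continuous_const.dist continuous_id).measurable
    exact Real.measurable_exp.comp ((h.comp (measurable_pi_apply i)).pow_const p).neg
  have hF : Integrable F P := by
    refine Integrable.of_bound (C := 1) hFm.aestronglyMeasurable (ae_of_all _ fun y => ?_)
    rw [Real.norm_of_nonneg (hF0 y)]
    exact Finset.prod_le_one (fun i _ => (Real.exp_pos _).le) fun i _ =>
      Real.exp_le_one_iff.2 (neg_nonpos.2 (by positivity))
  have hsub : {y : Fin n → X | (∑ i, dist (x i) (y i) ^ p) ^ (1 / p) < r} ⊆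
      {y | Real.exp (-r ^ p) ≤ F y} := by
    intro y hy
    have hS : 0 ≤ ∑ i, dist (x i) (y i) ^ p := Finset.sum_nonneg fun i _ => by positivity
    have hlt : (∑ i, dist (x i) (y i) ^ p) ^ (1 / p) < r := hy
    have hle : ∑ i, dist (x i) (y i) ^ p ≤ r ^ p := by
      rw [one_div] at hlt
      exact ((Real.rpow_inv_lt_iff_of_pos hS hr hp).1 hlt).le
    change _ ≤ ∏ i, Real.exp (-dist (x i) (y i) ^ p)
    rw [← Real.exp_sum, Finset.sum_neg_distrib]
    exact Real.exp_le_exp.2 (neg_le_neg hle)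
  have hFint : ∫ y, F y ∂P ≤ c ^ n := by
    rw [integral_fintype_prod_eq_prod (fun i z => Real.exp (-dist (x i) z ^ p))]
    calc _ ≤ ∏ _i : Fin n, c := Finset.prod_le_prod
          (fun i _ => integral_nonneg fun z => (Real.exp_pos _).le) fun i _ => hc (x i)
      _ = c ^ n := by simp
  have hmarkov := mul_meas_ge_le_integral_of_nonneg (ae_of_all P hF0) hF (Real.exp (-r ^ p))
  calc _ ≤ P.real {y | Real.exp (-r ^ p) ≤ F y} := measureReal_mono hsub
    _ = Real.exp (r ^ p) * (Real.exp (-r ^ p) * P.real {y | Real.exp (-r ^ p) ≤ F y}) := by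
        rw [← mul_assoc, ← Real.exp_add]
        simp
    _ ≤ Real.exp (r ^ p) * c ^ n :=
        mul_le_mul_of_nonneg_left (hmarkov.trans hFint) (Real.exp_pos _).le

/-- For a nontrivial mm-space `(X, d, μ)` (complete separable metric space, `supp μ = X`,
at least two points) and `1 ≤ p < ∞`, the supremum over all centers `x ∈ Xⁿ` of the
`μ^{⊗n}`-measure of the open `r`-ball about `x` in the `ℓᵖ` product metric tends to `0`
as `n → ∞`, for every `r > 0`. -/
theorem tendsto_sup_measure_lp_ball_zero {X : Type*} [MetricSpace X] [CompleteSpace X]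
    [TopologicalSpace.SeparableSpace X] [MeasurableSpace X] [BorelSpace X] [Nontrivial X]
    (μ : Measure X) [IsProbabilityMeasure μ]
    (hsupp : ∀ x : X, ∀ ε > 0, 0 < μ (Metric.ball x ε))
    (p : ℝ) (hp : 1 ≤ p) (r : ℝ) (hr : 0 < r) :
    Filter.Tendsto
      (fun n : ℕ =>
        ⨆ x : Fin n → X,
          ((Measure.pi fun _ : Fin n => μ)
            {y : Fin n → X | (∑ i, dist (x i) (y i) ^ p) ^ (1 / p) < r}).toReal)
      Filter.atTop (nhds 0) := by
  have hp0 : 0 < p := by linarith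
  obtain ⟨c, hc1, hc⟩ := exists_integral_exp_neg_dist_rpow_le μ hsupp hp0
  have hc0 : 0 ≤ c := by
    obtain ⟨x⟩ : Nonempty X := inferInstance
    exact (integral_nonneg fun y => (Real.exp_pos _).le).trans (hc x)
  refine squeeze_zero (fun n => Real.iSup_nonneg fun x => ENNReal.toReal_nonneg)
    (fun n => ciSup_le fun x => measureReal_pi_lp_ball_le μ hp0 hr.le hc x) ?_
  simpa using (tendsto_pow_atTop_nhds_zero_of_lt_one hc0 hc1).const_mul (Real.exp (r ^ p))
end

section
/- Let X be a complete separable metric space and μ a Borel probability measure on X whose support is all of X and which contains at least two points. For each n ∈ ℕ, equip X^n with the supremum metric d_∞((x_i), (y_i)) := max_{1≤i≤n} dist(x_i, y_i) and with the n-fold product measure μ^{⊗n}. Then for every r with 0 < r < diam(X)/2, lim_{n→∞} sup_{x ∈ X^n} μ^{⊗n}(U_r(x)) = 0, where U_r(x) is the open ball of radius r about x in the supremum metric. -/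
open MeasureTheory

/-- If some two points are more than `2 * r` apart and every ball has positive measure, then the
measures of the balls of radius `r` are bounded away from `1`. -/
lemma exists_forall_measureReal_ball_le_lt_one {X : Type*} [PseudoMetricSpace X]
    [MeasurableSpace X] [OpensMeasurableSpace X] (μ : Measure X) [IsProbabilityMeasure μ]
    (hsupp : ∀ x : X, ∀ ε > 0, 0 < μ (Metric.ball x ε)) {r : ℝ} {a b : X}
    (hab : 2 * r < dist a b) :
    ∃ q : ℝ, 0 ≤ q ∧ q < 1 ∧ ∀ x : X, μ.real (Metric.ball x r) ≤ q := by
  obtain ⟨ε, hε, hεr⟩ : ∃ ε > 0, 2 * ε + 2 * r = dist a b :=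
    ⟨(dist a b - 2 * r) / 2, by linarith, by ring⟩
  have hpos : ∀ y : X, 0 < μ.real (Metric.ball y ε) := fun y =>
    ENNReal.toReal_pos (hsupp y ε hε).ne' (measure_ne_top μ _)
  have hbound : ∀ x y : X, r + ε ≤ dist x y →
      μ.real (Metric.ball x r) ≤ 1 - μ.real (Metric.ball y ε) := by
    intro x y hxy
    have hunion := measureReal_union (μ := μ) (Metric.ball_disjoint_ball hxy)
      Metric.isOpen_ball.measurableSet
    have hle : μ.real (Metric.ball x r ∪ Metric.ball y ε) ≤ 1 := measureReal_le_one
    linarith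
  refine ⟨1 - min (μ.real (Metric.ball a ε)) (μ.real (Metric.ball b ε)), ?_, ?_, fun x => ?_⟩
  · exact sub_nonneg.2 ((min_le_left _ _).trans measureReal_le_one)
  · exact sub_lt_self _ (lt_min (hpos a) (hpos b))
  · rcases le_or_gt (r + ε) (dist x a) with h | h
    · exact (hbound x a h).trans (sub_le_sub_left (min_le_left _ _) _)
    · have hxb : r + ε ≤ dist x b := by linarith [dist_triangle_left a b x]
      exact (hbound x b hxb).trans (sub_le_sub_left (min_le_right _ _) _)

/-- For a nontrivial mm-space `(X, d, μ)` (complete separable metric space, `supp μ = X`,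
at least two points) and any `r` with `0 < r < diam(X)/2` (using the extended diameter),
the supremum over all centers `x ∈ Xⁿ` of the `μ^{⊗n}`-measure of the open `r`-ball about
`x` in the supremum (`ℓ^∞`) product metric (which is the standard product metric on
`Fin n → X`) tends to `0` as `n → ∞`. -/
theorem tendsto_sup_measure_supBall_zero {X : Type*} [MetricSpace X] [CompleteSpace X]
    [TopologicalSpace.SeparableSpace X] [MeasurableSpace X] [BorelSpace X] [Nontrivial X]
    (μ : Measure X) [IsProbabilityMeasure μ]
    (hsupp : ∀ x : X, ∀ ε > 0, 0 < μ (Metric.ball x ε))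
    (r : ℝ) (hr : 0 < r)
    (hrdiam : ENNReal.ofReal (2 * r) < EMetric.diam (Set.univ : Set X)) :
    Filter.Tendsto
      (fun n : ℕ =>
        ⨆ x : Fin n → X,
          ((Measure.pi fun _ : Fin n => μ) (Metric.ball x r)).toReal)
      Filter.atTop (nhds 0) := by
  obtain ⟨a, b, hab⟩ : ∃ a b : X, 2 * r < dist a b := by
    by_contra! h
    refine hrdiam.not_ge (Metric.ediam_le fun a _ b _ => ?_)
    rw [edist_dist]
    exact ENNReal.ofReal_le_ofReal (h a b)
  obtain ⟨q, hq0, hq1, hq⟩ := exists_forall_measureReal_ball_le_lt_one μ hsupp hab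
  refine squeeze_zero (fun n => Real.iSup_nonneg fun x => ENNReal.toReal_nonneg)
    (fun n => ciSup_le fun x => ?_) (tendsto_pow_atTop_nhds_zero_of_lt_one hq0 hq1)
  rw [ball_pi x hr, Measure.pi_pi, ENNReal.toReal_prod]
  calc ∏ i, (μ (Metric.ball (x i) r)).toReal ≤ ∏ _i : Fin n, q :=
        Finset.prod_le_prod (fun _ _ => ENNReal.toReal_nonneg) fun i _ => hq (x i)
    _ = q ^ n := by simp
end

section
/- Let S be a metric space, let τ and ν be Borel probability measures on S, and let A ⊆ S be a Borel set with τ(A) = 1 and such that ν(B) ≤ τ(B) for every Borel set B ⊆ A. Fix a point x₀ ∈ A and define the probability measure ν̃ := ν|_A + ν(S∖A)·δ_{x₀}, where ν|_A is the restriction of ν to A. Then for every Borel set B ⊆ S we have |τ(B) − ν̃(B)| ≤ 1 − ν(A); in particular the total variation distance between τ and ν̃ is at most 1 − ν(A). -/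
open MeasureTheory

/-- The total variation distance between two Borel probability measures:
`d_TV(μ, ν) := sup {|μ(A) − ν(A)| : A Borel}`. -/
noncomputable def tvDist {X : Type*} [MeasurableSpace X] (μ ν : Measure X) : ℝ :=
  ⨆ A : {A : Set X // MeasurableSet A}, |(μ A.1).toReal - (ν A.1).toReal|

/-- Let `τ`, `ν` be Borel probability measures on a metric space `S`, `A` Borel with
`τ(A) = 1` and `ν(B) ≤ τ(B)` for all Borel `B ⊆ A`, and `x₀ ∈ A`. Then the probability
measure `ν̃ := ν|_A + ν(S∖A)·δ_{x₀}` satisfies `|τ(B) − ν̃(B)| ≤ 1 − ν(A)` for every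
Borel set `B`; in particular `d_TV(τ, ν̃) ≤ 1 − ν(A)`. -/
theorem tv_pushIn_le {S : Type*} [MetricSpace S] [MeasurableSpace S] [BorelSpace S]
    (τ ν : Measure S) [IsProbabilityMeasure τ] [IsProbabilityMeasure ν]
    (A : Set S) (hA : MeasurableSet A) (hτA : τ A = 1)
    (hle : ∀ B : Set S, B ⊆ A → MeasurableSet B → ν B ≤ τ B)
    (x₀ : S) (hx₀ : x₀ ∈ A) :
    (∀ B : Set S, MeasurableSet B →
        |(τ B).toReal - ((ν.restrict A + ν Aᶜ • Measure.dirac x₀) B).toReal| ≤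
          1 - (ν A).toReal) ∧
      tvDist τ (ν.restrict A + ν Aᶜ • Measure.dirac x₀) ≤ 1 - (ν A).toReal := by
  have hτ : τ.real A = 1 := by simp [measureReal_def, hτA]
  have hle' : ∀ B : Set S, B ⊆ A → MeasurableSet B → ν.real B ≤ τ.real B := fun B hBA hB =>
    ENNReal.toReal_mono (measure_ne_top τ B) (hle B hBA hB)
  have key : ∀ B : Set S, MeasurableSet B →
      |(τ B).toReal - ((ν.restrict A + ν Aᶜ • Measure.dirac x₀) B).toReal| ≤
        1 - (ν A).toReal := by
    intro B hB
    have hτB : τ.real B = τ.real (A ∩ B) := by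
      have hτc : τ.real (B \ A) = 0 :=
        measureReal_mono_null (Set.sdiff_subset_compl B A)
          (by rw [probReal_compl_eq_one_sub hA]; linarith)
      have := measureReal_inter_add_sdiff (μ := τ) (s := B) hA
      rw [Set.inter_comm] at this
      linarith
    have hpush : ((ν.restrict A + ν Aᶜ • Measure.dirac x₀) B).toReal =
        ν.real (A ∩ B) + (1 - ν.real A) * B.indicator 1 x₀ := by
      rw [← probReal_compl_eq_one_sub hA, Measure.add_apply, Measure.smul_apply,
        Measure.restrict_apply hB, Measure.dirac_apply' _ hB, Set.inter_comm]
      by_cases hx : x₀ ∈ B <;> simp [hx, measureReal_def, ENNReal.toReal_add]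
    have hinter := hle' (A ∩ B) Set.inter_subset_left (hA.inter hB)
    have hdiff := hle' (A \ B) Set.sdiff_subset (hA.diff hB)
    have hτsplit := measureReal_inter_add_sdiff (μ := τ) (s := A) hB
    have hνsplit := measureReal_inter_add_sdiff (μ := ν) (s := A) hB
    rw [hpush, ← measureReal_def, ← measureReal_def, hτB, abs_le]
    by_cases hx : x₀ ∈ B <;> simp only [hx, Set.indicator_of_mem, Set.indicator_of_notMem,
      not_false_eq_true, Pi.one_apply] <;> constructor <;> linarith
  have : Nonempty {B : Set S // MeasurableSet B} := ⟨⟨A, hA⟩⟩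
  exact ⟨key, ciSup_le fun B => key B.1 B.2⟩
end
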